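/- If A and B are skew shapes of the same size with supp(B) ⊆ supp(A), then rows(A) ⊴ rows(B) and cols(A) ⊴ cols(B) in dominance order. -/

import Mathlib

/-- A skew shape `outer / inner`: the boxes of the Young diagram of `outer`
that are not boxes of the Young diagram of `inner`. -/
structure SkewShape where
  outer : YoungDiagram
  inner : YoungDiagram
  inner_le : inner ≤ outer

namespace SkewShape

/-- The set of boxes of a skew shape. -/
def cells (A : SkewShape) : Finset (ℕ × ℕ) := A.outer.cells \ A.inner.cells

/-- The size of a skew shape is its number of boxes. -/
def size (A : SkewShape) : ℕ := A.cells.card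

/-- The length of row `i` of a skew shape. -/
def rowLen (A : SkewShape) (i : ℕ) : ℕ := (A.cells.filter fun c => c.1 = i).card

/-- The length of column `j` of a skew shape. -/
def colLen (A : SkewShape) (j : ℕ) : ℕ := (A.cells.filter fun c => c.2 = j).card

/-- The set of indices of nonempty rows. -/
def rowSet (A : SkewShape) : Finset ℕ := A.cells.image Prod.fst

/-- The set of indices of nonempty columns. -/
def colSet (A : SkewShape) : Finset ℕ := A.cells.image Prod.snd

/-- The number of nonempty rows. -/
def numRows (A : SkewShape) : ℕ := A.rowSet.card

/-- The number of nonempty columns. -/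
def numCols (A : SkewShape) : ℕ := A.colSet.card

/-- `rows A`: the multiset of lengths of the nonempty rows of `A`
(equivalently, that sequence sorted into weakly decreasing order). -/
def rows (A : SkewShape) : Multiset ℕ := A.rowSet.val.map A.rowLen

/-- `cols A`: the multiset of lengths of the nonempty columns of `A`. -/
def cols (A : SkewShape) : Multiset ℕ := A.colSet.val.map A.colLen

/-- A skew shape is disconnected if its boxes can be split into two nonempty
parts such that no box of one part shares a row or a column with a box of the
other part. -/
def Disconnected (A : SkewShape) : Prop :=
  ∃ B C : Finset (ℕ × ℕ), B.Nonempty ∧ C.Nonempty ∧ B ∪ C = A.cells ∧ B ∩ C = ∅ ∧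
    ∀ b ∈ B, ∀ c ∈ C, b.1 ≠ c.1 ∧ b.2 ≠ c.2

/-- A skew shape is connected if it is nonempty and not disconnected. -/
def Connected (A : SkewShape) : Prop := A.cells.Nonempty ∧ ¬ A.Disconnected

/-- A ribbon is a connected skew shape containing no 2×2 block of boxes. -/
def Ribbon (A : SkewShape) : Prop :=
  A.Connected ∧ ∀ i j : ℕ, ¬ ((i, j) ∈ A.cells ∧ (i, j + 1) ∈ A.cells ∧
    (i + 1, j) ∈ A.cells ∧ (i + 1, j + 1) ∈ A.cells)

/-- The lengths of any two nonempty rows differ by at most one. -/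
def RowEquitable (A : SkewShape) : Prop :=
  ∀ i ∈ A.rowSet, ∀ i' ∈ A.rowSet, A.rowLen i ≤ A.rowLen i' + 1

/-- The lengths of any two nonempty columns differ by at most one. -/
def ColEquitable (A : SkewShape) : Prop :=
  ∀ j ∈ A.colSet, ∀ j' ∈ A.colSet, A.colLen j ≤ A.colLen j' + 1

/-- Equitable: both row equitable and column equitable. -/
def Equitable (A : SkewShape) : Prop := A.RowEquitable ∧ A.ColEquitable

/-- A filling of a skew shape is semistandard if its entries are positive
integers, weakly increasing along rows and strictly increasing down columns. -/
def IsSsyt (A : SkewShape) (T : ℕ × ℕ → ℕ) : Prop :=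
  (∀ c ∈ A.cells, 1 ≤ T c) ∧
  (∀ i j j', (i, j) ∈ A.cells → (i, j') ∈ A.cells → j ≤ j' → T (i, j) ≤ T (i, j')) ∧
  (∀ i i' j, (i, j) ∈ A.cells → (i', j) ∈ A.cells → i < i' → T (i, j) < T (i', j))

end SkewShape

/-- `c` comes weakly before `d` in the reverse reading order (right to left
along rows, rows top to bottom). -/
def ReadsBefore (c d : ℕ × ℕ) : Prop := c.1 < d.1 ∨ (c.1 = d.1 ∧ d.2 ≤ c.2)

instance : DecidableRel ReadsBefore := fun c d => by unfold ReadsBefore; infer_instance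

namespace SkewShape

/-- The number of boxes of `A` filled with the entry `k` by the filling `T`. -/
def content (A : SkewShape) (T : ℕ × ℕ → ℕ) (k : ℕ) : ℕ :=
  (A.cells.filter fun c => T c = k).card

/-- A Littlewood--Richardson filling: a semistandard filling such that every
prefix of the reverse reading word contains at least as many `k`'s as
`(k+1)`'s, for every positive `k`. -/
def IsLR (A : SkewShape) (T : ℕ × ℕ → ℕ) : Prop :=
  A.IsSsyt T ∧ ∀ d ∈ A.cells, ∀ k : ℕ,
    (A.cells.filter fun c => T c = k + 2 ∧ ReadsBefore c d).card ≤
    (A.cells.filter fun c => T c = k + 1 ∧ ReadsBefore c d).card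

end SkewShape

/-- The `i`-th largest part (0-indexed) of a multiset of natural numbers,
i.e. the `i`-th entry of the multiset sorted into weakly decreasing order. -/
def part (lam : Multiset ℕ) (i : ℕ) : ℕ := (lam.sort (· ≥ ·)).getD i 0

namespace SkewShape

/-- The support of a skew shape `A`: the set of partitions `lam` (multisets of
positive integers) for which there exists an LR filling of `A` of content `lam`. -/
def supp (A : SkewShape) : Set (Multiset ℕ) :=
  {lam | 0 ∉ lam ∧ ∃ T : ℕ × ℕ → ℕ, A.IsLR T ∧ ∀ i : ℕ, A.content T (i + 1) = part lam i}

/-- The set of LR fillings of `A` of content `lam` (normalized to vanish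
outside the boxes of `A`). -/
def LRset (A : SkewShape) (lam : Multiset ℕ) : Set ((ℕ × ℕ) → ℕ) :=
  {T | A.IsLR T ∧ (∀ c, c ∉ A.cells → T c = 0) ∧ ∀ i : ℕ, A.content T (i + 1) = part lam i}

/-- `s_A − s_B` is Schur-positive: for every partition, the number of LR
fillings of `B` of that content is at most the number for `A`. -/
def SchurPosDiff (A B : SkewShape) : Prop :=
  ∀ lam : Multiset ℕ, (B.LRset lam).ncard ≤ (A.LRset lam).ncard

end SkewShape

/-- The sum of the `k` largest parts of a multiset of natural numbers. -/
def psum (lam : Multiset ℕ) (k : ℕ) : ℕ := ((lam.sort (· ≥ ·)).take k).sum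

/-- Dominance order: `DomLe lam mu` means `lam ⊴ mu`, i.e. for every `k` the
sum of the `k` largest parts of `lam` is at most that of `mu`. -/
def DomLe (lam mu : Multiset ℕ) : Prop := ∀ k : ℕ, psum lam k ≤ psum mu k

/-- The conjugate (transpose) of a partition given as a multiset: its parts
are the numbers `#{x ∈ lam | x ≥ j}` for `j = 1, 2, …`. -/
def conj (lam : Multiset ℕ) : Multiset ℕ :=
  ((Finset.range lam.sum).val.map fun j => Multiset.card (lam.filter fun x => j + 1 ≤ x)).filter
    fun y => y ≠ 0

lemma card_Icc_one (n : ℕ) : (Finset.Icc 1 n).card = n := by simp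

lemma psum_le_aux (m : ℕ) : ∀ (l : List ℕ) (k : ℕ), (l.take k).sum ≤ k * m + (l.map (· - m)).sum
  | [], k => by simp
  | a :: l, 0 => by simp
  | a :: l, k + 1 => by
    have := psum_le_aux m l k
    simp only [List.take_succ_cons, List.sum_cons, List.map_cons, Nat.succ_mul]
    omega

lemma psum_eq_aux : ∀ (l : List ℕ) (k : ℕ), l.Pairwise (· ≥ ·) →
    (l.take k).sum = k * l.getD k 0 + (l.map (· - l.getD k 0)).sum
  | [], k, _ => by simp
  | a :: l, 0, h => by
    simp only [List.pairwise_cons] at h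
    have h0 : (l.map (fun x => x - a)).sum = 0 := by
      rw [List.sum_eq_zero_iff]
      intro y hy
      simp only [List.mem_map] at hy
      obtain ⟨x, hx, rfl⟩ := hy
      have := h.1 x hx
      omega
    simp [h0]
  | a :: l, k + 1, h => by
    simp only [List.pairwise_cons] at h
    have := psum_eq_aux l k h.2
    have h2 : l.getD k 0 ≤ a := by
      rw [List.getD_eq_getElem?_getD]
      by_cases hk : k < l.length
      · simp [hk]
        exact h.1 _ (List.getElem_mem hk)
      · simp [List.getElem?_eq_none (not_lt.mp hk)]
    simp only [List.take_succ_cons, List.sum_cons, List.map_cons, Nat.succ_mul, List.getD_cons_succ]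
    omega

lemma map_sort_sum (s : Multiset ℕ) (f : ℕ → ℕ) :
    ((s.sort (· ≥ ·)).map f).sum = (s.map f).sum := by
  conv_rhs => rw [← Multiset.sort_eq s (· ≥ ·)]
  simp only [Multiset.map_coe, Multiset.sum_coe]

lemma domLe_of_min (s t : Finset ℕ) (g h : ℕ → ℕ) (hs : ∑ i ∈ s, g i = ∑ i ∈ t, h i)
    (hm : ∀ m, ∑ i ∈ t, min m (h i) ≤ ∑ i ∈ s, min m (g i)) :
    DomLe (s.val.map g) (t.val.map h) := by
  intro k
  unfold psum
  rw [psum_eq_aux ((t.val.map h).sort (· ≥ ·)) k (Multiset.pairwise_sort _ _)]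
  set m := ((t.val.map h).sort (· ≥ ·)).getD k 0
  refine (psum_le_aux m _ k).trans ?_
  rw [map_sort_sum, map_sort_sum, Multiset.map_map, Multiset.map_map]
  change k * m + ∑ i ∈ s, (g i - m) ≤ k * m + ∑ i ∈ t, (h i - m)
  have h1 : ∑ i ∈ s, g i = ∑ i ∈ s, min m (g i) + ∑ i ∈ s, (g i - m) := by
    rw [← Finset.sum_add_distrib]
    exact Finset.sum_congr rfl fun i _ => by omega
  have h2 : ∑ i ∈ t, h i = ∑ i ∈ t, min m (h i) + ∑ i ∈ t, (h i - m) := by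
    rw [← Finset.sum_add_distrib]
    exact Finset.sum_congr rfl fun i _ => by omega
  have := hm m
  omega

lemma exists_lam (f : ℕ → ℕ) (hf : Antitone f) (hz : ∃ n, f n = 0) :
    ∃ lam : Multiset ℕ, 0 ∉ lam ∧ ∀ i, f i = part lam i := by
  classical
  set N := Nat.find hz with hN
  refine ⟨(((List.range N).map f : List ℕ) : Multiset ℕ), ?_, ?_⟩
  · simp only [Multiset.mem_coe, List.mem_map, List.mem_range, not_exists, not_and]
    intro x hx
    exact Nat.find_min hz hx
  · intro i
    unfold part
    rw [Multiset.coe_sort, List.mergeSort_eq_self]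
    · rw [List.getD_eq_getElem?_getD]
      by_cases hi : i < N
      · simp [hi]
      · have h0 : f i = 0 := by
          have := hf (not_lt.mp hi)
          have h1 : f N = 0 := Nat.find_spec hz
          omega
        simp [hi, h0]
    · rw [List.pairwise_map]
      refine List.Pairwise.imp ?_ List.pairwise_lt_range
      intro a b hab
      simpa using hf hab.le

namespace SkewShape

lemma mem_cells_row (A : SkewShape) (i j : ℕ) :
    (i, j) ∈ A.cells ↔ A.inner.rowLen i ≤ j ∧ j < A.outer.rowLen i := by
  simp [cells, YoungDiagram.mem_iff_lt_rowLen, and_comm]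

lemma mem_cells_col (A : SkewShape) (i j : ℕ) :
    (i, j) ∈ A.cells ↔ A.inner.colLen j ≤ i ∧ i < A.outer.colLen j := by
  simp [cells, YoungDiagram.mem_iff_lt_colLen, and_comm]

lemma rowLen_eq (A : SkewShape) (i : ℕ) :
    A.rowLen i = A.outer.rowLen i - A.inner.rowLen i := by
  rw [← Nat.card_Ico]
  unfold rowLen
  refine Finset.card_bij (fun c _ => c.2) ?_ ?_ ?_
  · rintro ⟨a, b⟩ h
    simp only [Finset.mem_filter, mem_cells_row] at h
    obtain ⟨h, rfl⟩ := h
    simpa using h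
  · rintro ⟨a, b⟩ h ⟨a', b'⟩ h' e
    simp only [Finset.mem_filter] at h h' e
    simp [h.2, h'.2, e]
  · intro b hb
    refine ⟨(i, b), ?_, rfl⟩
    simpa [mem_cells_row] using hb

lemma sum_rowLen (A : SkewShape) : ∑ i ∈ A.rowSet, A.rowLen i = A.size :=
  (Finset.card_eq_sum_card_image Prod.fst A.cells).symm

lemma sum_colLen (A : SkewShape) : ∑ i ∈ A.colSet, A.colLen i = A.size :=
  (Finset.card_eq_sum_card_image Prod.snd A.cells).symm

/-- number of entries `r` read weakly before `d`. -/
def cnt (A : SkewShape) (T : ℕ × ℕ → ℕ) (r : ℕ) (d : ℕ × ℕ) : ℕ :=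
  (A.cells.filter fun c => T c = r ∧ ReadsBefore c d).card

lemma cnt_anti {A : SkewShape} {T : ℕ × ℕ → ℕ} (h : A.IsLR T) {d : ℕ × ℕ} (hd : d ∈ A.cells)
    {r s : ℕ} (hr : 1 ≤ r) (hrs : r ≤ s) : A.cnt T s d ≤ A.cnt T r d := by
  induction s, hrs using Nat.le_induction with
  | base => exact le_rfl
  | succ n hn ih =>
    obtain ⟨k, rfl⟩ : ∃ k, n = k + 1 := ⟨n - 1, by omega⟩
    exact (h.2 d hd k).trans ih

lemma exists_last (A : SkewShape) (hne : A.cells.Nonempty) :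
    ∃ d ∈ A.cells, ∀ c ∈ A.cells, ReadsBefore c d := by
  obtain ⟨d, hd, h⟩ := A.cells.exists_max_image Prod.fst hne
  have hne' : (A.cells.filter fun c => c.1 = d.1).Nonempty := ⟨d, by simp [hd]⟩
  obtain ⟨e, he, h'⟩ := Finset.exists_min_image _ Prod.snd hne'
  simp only [Finset.mem_filter] at he h'
  refine ⟨e, he.1, fun c hc => ?_⟩
  have h1 := h c hc
  unfold ReadsBefore
  by_cases hcd : c.1 = d.1
  · right; exact ⟨by omega, h' c ⟨hc, hcd⟩⟩
  · left; omega

lemma content_antitone {A : SkewShape} {T : ℕ × ℕ → ℕ} (h : A.IsLR T) :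
    Antitone fun i => A.content T (i + 1) := by
  rcases A.cells.eq_empty_or_nonempty with he | hne
  · intro i j _
    simp [content, he]
  · obtain ⟨d, hd, hlast⟩ := A.exists_last hne
    have key : ∀ r, A.content T r = A.cnt T r d := by
      intro r
      unfold content cnt
      congr 1
      apply Finset.filter_congr
      intro c hc
      simp [hlast c hc]
    intro i j hij
    simp only [key]
    exact cnt_anti h hd (by omega) (by omega)

lemma content_zero (A : SkewShape) (T : ℕ × ℕ → ℕ) {k : ℕ} (hk : A.cells.sup T < k) :
    A.content T k = 0 := by
  unfold content
  rw [Finset.card_eq_zero, Finset.filter_eq_empty_iff]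
  intro c hc e
  have := Finset.le_sup (f := T) hc
  omega

lemma transfer {A B : SkewShape} (h : B.supp ⊆ A.supp) {T : ℕ × ℕ → ℕ} (hT : B.IsLR T) :
    ∃ T', A.IsLR T' ∧ ∀ i, A.content T' (i + 1) = B.content T (i + 1) := by
  obtain ⟨lam, h0, hl⟩ := exists_lam _ (content_antitone hT)
    ⟨B.cells.sup T, B.content_zero T (Nat.lt_succ_self _)⟩
  obtain ⟨-, T', hT', hc⟩ := h (show lam ∈ B.supp from ⟨h0, T, hT, hl⟩)
  exact ⟨T', hT', fun i => by rw [hc, hl]⟩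

/-! ### columns -/

lemma col_upper {A : SkewShape} {T : ℕ × ℕ → ℕ} (h : A.IsSsyt T) (m : ℕ) :
    ∑ r ∈ Finset.range m, A.content T (r + 1) ≤ ∑ j ∈ A.colSet, min m (A.colLen j) := by
  have h1 : ∑ r ∈ Finset.range m, A.content T (r + 1)
      = (A.cells.filter fun c => T c ≤ m).card := by
    rw [Finset.card_eq_sum_card_fiberwise (f := fun c => T c - 1) (t := Finset.range m)]
    · refine Finset.sum_congr rfl fun r hr => ?_
      unfold content
      rw [Finset.filter_filter]
      congr 1
      apply Finset.filter_congr
      intro c hc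
      have := h.1 c hc
      simp at hr
      omega
    · intro c hc
      simp at hc ⊢
      have := h.1 c hc.1
      omega
  rw [h1, Finset.card_eq_sum_card_fiberwise (f := Prod.snd) (t := A.colSet)]
  · refine Finset.sum_le_sum fun j _ => le_min ?_ ?_
    · refine le_of_le_of_eq ?_ (card_Icc_one m)
      refine Finset.card_le_card_of_injOn T ?_ ?_
      · intro c hc
        simp at hc ⊢
        exact ⟨h.1 c hc.1.1, hc.1.2⟩
      · rintro ⟨a, b⟩ hc ⟨a', b'⟩ hc' e
        simp at hc hc'
        obtain ⟨hc, rfl⟩ := hc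
        obtain ⟨hc', rfl⟩ := hc'
        rcases lt_trichotomy a a' with hl | hl | hl
        · exact absurd e (h.2.2 _ _ _ hc.1 hc'.1 hl).ne
        · rw [hl]
        · exact absurd e (h.2.2 _ _ _ hc'.1 hc.1 hl).ne'
    · apply Finset.card_le_card
      intro c
      simp
      tauto
  · intro c hc
    simp at hc
    exact Finset.mem_image_of_mem _ hc.1

/-- the filling by depth in the column -/
def colFill (B : SkewShape) (c : ℕ × ℕ) : ℕ := c.1 - B.inner.colLen c.2 + 1

lemma colFill_isLR (B : SkewShape) : B.IsLR B.colFill := by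
  refine ⟨⟨fun c _ => by simp [colFill], ?_, ?_⟩, ?_⟩
  · intro i j j' h h' hj
    have := B.inner.colLen_anti j j' hj
    simp only [colFill]
    omega
  · intro i i' j h h' hi
    rw [mem_cells_col] at h h'
    simp only [colFill]
    omega
  · intro d hd k
    refine Finset.card_le_card_of_injOn (fun c => (c.1 - 1, c.2)) ?_ ?_
    · rintro ⟨a, b⟩ hc
      simp [mem_cells_col, colFill, ReadsBefore] at hc ⊢
      omega
    · rintro ⟨a, b⟩ hc ⟨a', b'⟩ hc' e
      simp [mem_cells_col, colFill] at hc hc' e ⊢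
      omega

lemma col_lower (B : SkewShape) (m : ℕ) :
    ∑ j ∈ B.colSet, min m (B.colLen j) ≤ ∑ r ∈ Finset.range m, B.content B.colFill (r + 1) := by
  have h1 : ∑ r ∈ Finset.range m, B.content B.colFill (r + 1)
      = (B.cells.filter fun c => B.colFill c ≤ m).card := by
    rw [Finset.card_eq_sum_card_fiberwise (f := fun c => B.colFill c - 1) (t := Finset.range m)]
    · refine Finset.sum_congr rfl fun r hr => ?_
      unfold content
      rw [Finset.filter_filter]
      congr 1
      apply Finset.filter_congr
      intro c hc
      simp [colFill] at hr ⊢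
      omega
    · intro c hc
      simp [colFill] at hc ⊢
      omega
  rw [h1, Finset.card_eq_sum_card_fiberwise (f := Prod.snd) (t := B.colSet)]
  · refine Finset.sum_le_sum fun j _ => ?_
    have hlen : B.colLen j ≤ B.outer.colLen j - B.inner.colLen j := by
      rw [← Nat.card_Ico]
      refine Finset.card_le_card_of_injOn Prod.fst ?_ ?_
      · rintro ⟨a, b⟩ hc
        simp [mem_cells_col] at hc ⊢
        obtain ⟨hc, rfl⟩ := hc
        exact hc
      · rintro ⟨a, b⟩ hc ⟨a', b'⟩ hc' e
        simp at hc hc' e ⊢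
        omega
    refine (min_le_min_left m hlen).trans ?_
    rw [← Finset.card_range (min m _)]
    refine Finset.card_le_card_of_injOn (fun x => (B.inner.colLen j + x, j)) ?_ ?_
    · intro x hx
      simp [mem_cells_col, colFill] at hx ⊢
      omega
    · intro x _ y _ e
      simpa using e
  · intro c hc
    simp at hc
    exact Finset.mem_image_of_mem _ hc.1

/-! ### rows -/

lemma cnt_lt {A : SkewShape} {T : ℕ × ℕ → ℕ} {r : ℕ} {c d : ℕ × ℕ} (hd : d ∈ A.cells)
    (hT : T d = r) (hcd : ReadsBefore c d) (hne : c ≠ d) : A.cnt T r c < A.cnt T r d := by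
  unfold cnt
  apply Finset.card_lt_card
  have hnd : ¬ ReadsBefore d c := by
    intro h
    apply hne
    unfold ReadsBefore at *
    ext <;> omega
  refine Finset.ssubset_iff_of_subset ?_ |>.2 ⟨d, ?_, ?_⟩
  · intro x hx
    simp only [Finset.mem_filter] at hx ⊢
    refine ⟨hx.1, hx.2.1, ?_⟩
    have := hx.2.2
    unfold ReadsBefore at *
    omega
  · exact Finset.mem_filter.2 ⟨hd, hT, Or.inr ⟨rfl, le_rfl⟩⟩
  · simp [hnd]

lemma readsBefore_total (c d : ℕ × ℕ) : ReadsBefore c d ∨ ReadsBefore d c := by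
  unfold ReadsBefore; omega

lemma cnt_inj {A : SkewShape} {T : ℕ × ℕ → ℕ} {r : ℕ} {c d : ℕ × ℕ} (hc : c ∈ A.cells)
    (hd : d ∈ A.cells) (hTc : T c = r) (hTd : T d = r) (e : A.cnt T r c = A.cnt T r d) :
    c = d := by
  by_contra hne
  rcases readsBefore_total c d with h | h
  · exact (cnt_lt hd hTd h hne).ne e
  · exact (cnt_lt hc hTc h (Ne.symm hne)).ne e.symm

lemma cnt_row_lt {A : SkewShape} {T : ℕ × ℕ → ℕ} (h : A.IsLR T) {i j j' : ℕ}
    (hc : (i, j) ∈ A.cells) (hc' : (i, j') ∈ A.cells) (hj : j < j') (hne : T (i, j) ≠ T (i, j')) :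
    A.cnt T (T (i, j')) (i, j') < A.cnt T (T (i, j)) (i, j) := by
  have hlt : T (i, j) < T (i, j') := lt_of_le_of_ne (h.1.2.1 _ _ _ hc hc' hj.le) hne
  refine (cnt_anti h hc' (h.1.1 _ hc) hlt.le).trans_lt ?_
  unfold cnt
  apply Finset.card_lt_card
  refine Finset.ssubset_iff_of_subset ?_ |>.2 ⟨(i, j), ?_, ?_⟩
  · intro x hx
    simp only [Finset.mem_filter] at hx ⊢
    refine ⟨hx.1, hx.2.1, ?_⟩
    have := hx.2.2
    unfold ReadsBefore at *
    simp only at *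
    omega
  · exact Finset.mem_filter.2 ⟨hc, rfl, Or.inr ⟨rfl, le_rfl⟩⟩
  · intro hx
    have := (Finset.mem_filter.1 hx).2.2
    unfold ReadsBefore at this
    simp only at this
    omega

lemma row_upper {A : SkewShape} {T : ℕ × ℕ → ℕ} (h : A.IsLR T) (m N : ℕ) :
    ∑ r ∈ Finset.range N, min m (A.content T (r + 1)) ≤ ∑ i ∈ A.rowSet, min m (A.rowLen i) := by
  have h1 : ∀ r, min m (A.content T (r + 1)) ≤
      ((A.cells.filter fun c => A.cnt T (T c) c ≤ m).filter fun c => T c = r + 1).card := by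
    intro r
    have himg : (A.cells.filter fun c => T c = r + 1).image (A.cnt T (r + 1))
        = Finset.Icc 1 (A.content T (r + 1)) := by
      apply Finset.eq_of_subset_of_card_le
      · intro x hx
        simp only [Finset.mem_image, Finset.mem_filter] at hx
        obtain ⟨c, ⟨hc, hT⟩, rfl⟩ := hx
        rw [Finset.mem_Icc]
        constructor
        · exact Finset.card_pos.2 ⟨c, Finset.mem_filter.2 ⟨hc, hT, Or.inr ⟨rfl, le_rfl⟩⟩⟩
        · apply Finset.card_le_card
          intro x
          simp only [Finset.mem_filter]
          tauto
      · rw [Finset.card_image_of_injOn]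
        · simp [content]
        · intro c hc d hd e
          simp only [Finset.coe_filter, Set.mem_ofPred_eq] at hc hd
          exact cnt_inj hc.1 hd.1 hc.2 hd.2 e
    have : Finset.Icc 1 (min m (A.content T (r + 1))) ⊆
      ((A.cells.filter fun c => A.cnt T (T c) c ≤ m).filter fun c => T c = r + 1).image
        (A.cnt T (r + 1)) := by
      intro x hx
      rw [Finset.mem_Icc, le_min_iff] at hx
      have hx' : x ∈ Finset.Icc 1 (A.content T (r + 1)) := Finset.mem_Icc.2 ⟨hx.1, hx.2.2⟩
      rw [← himg] at hx'
      simp only [Finset.mem_image, Finset.mem_filter] at hx' ⊢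
      obtain ⟨c, ⟨hc, hT⟩, rfl⟩ := hx'
      exact ⟨c, ⟨⟨hc, by rw [hT]; exact hx.2.1⟩, hT⟩, rfl⟩
    have h2 := (Finset.card_le_card this).trans Finset.card_image_le
    simpa using h2
  calc _ ≤ ∑ r ∈ Finset.range N,
      ((A.cells.filter fun c => A.cnt T (T c) c ≤ m).filter fun c => T c = r + 1).card :=
        Finset.sum_le_sum fun r _ => h1 r
    _ = ∑ r ∈ (Finset.range N).image (· + 1),
      ((A.cells.filter fun c => A.cnt T (T c) c ≤ m).filter fun c => T c = r).card := by
        rw [Finset.sum_image]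
        intro a _ b _ e
        simpa using e
    _ ≤ (A.cells.filter fun c => A.cnt T (T c) c ≤ m).card := by
        rw [← Finset.card_biUnion]
        · apply Finset.card_le_card
          intro x hx
          simp only [Finset.mem_biUnion, Finset.mem_filter] at hx ⊢
          obtain ⟨r, _, hx⟩ := hx
          exact hx.1
        · intro a _ b _ hab
          apply Finset.disjoint_left.2
          intro x hx hx'
          simp only [Finset.mem_filter] at hx hx'
          exact hab (hx.2.symm.trans hx'.2)
    _ ≤ _ := by
      rw [Finset.card_eq_sum_card_fiberwise (f := Prod.fst) (t := A.rowSet)]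
      · refine Finset.sum_le_sum fun i _ => le_min ?_ ?_
        · refine le_of_le_of_eq ?_ (card_Icc_one m)
          refine Finset.card_le_card_of_injOn (fun c => A.cnt T (T c) c) ?_ ?_
          · intro c hc
            simp only [Finset.coe_filter, Finset.mem_filter, Set.mem_ofPred_eq] at hc
            simp only [Finset.coe_Icc, Set.mem_Icc]
            exact ⟨Finset.card_pos.2 ⟨c, Finset.mem_filter.2 ⟨hc.1.1, rfl, Or.inr ⟨rfl, le_rfl⟩⟩⟩, hc.1.2⟩
          · rintro ⟨a, b⟩ hc ⟨a', b'⟩ hc' e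
            simp only [Finset.coe_filter, Finset.mem_filter, Set.mem_ofPred_eq] at hc hc' e
            obtain ⟨hc, rfl⟩ := hc
            obtain ⟨hc', rfl⟩ := hc'
            by_cases hT : T (a', b) = T (a', b')
            · rw [← hT] at e
              exact cnt_inj hc.1 hc'.1 rfl hT.symm e
            · rcases lt_trichotomy b b' with hl | hl | hl
              · exact absurd e (cnt_row_lt h hc.1 hc'.1 hl hT).ne'
              · rw [hl]
              · exact absurd e (cnt_row_lt h hc'.1 hc.1 hl (Ne.symm hT)).ne
        · apply Finset.card_le_card
          intro c
          simp only [Finset.mem_filter]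
          tauto
      · intro c hc
        simp only [Finset.coe_filter, Set.mem_ofPred_eq] at hc
        exact Finset.mem_image_of_mem _ hc.1

/-- position of a box in its row counted from the right -/
def pos (B : SkewShape) (c : ℕ × ℕ) : ℕ := B.outer.rowLen c.1 - c.2

/-- number of rows weakly above row `i` having length at least `p` -/
def rk (B : SkewShape) (i p : ℕ) : ℕ := ((Finset.range (i + 1)).filter fun a => p ≤ B.rowLen a).card

/-- the filling with content `rows B` -/
def rowFill (B : SkewShape) (c : ℕ × ℕ) : ℕ := B.rk c.1 (B.pos c)

lemma pos_le (B : SkewShape) {c : ℕ × ℕ} (hc : c ∈ B.cells) :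
    1 ≤ B.pos c ∧ B.pos c ≤ B.rowLen c.1 := by
  obtain ⟨a, b⟩ := c
  rw [mem_cells_row] at hc
  simp only [rowLen_eq, pos]
  omega

lemma rk_lt (B : SkewShape) {i i' p q : ℕ} (hi : i < i') (hq : q ≤ p) (hl : q ≤ B.rowLen i') :
    B.rk i p < B.rk i' q := by
  unfold rk
  apply Finset.card_lt_card
  refine Finset.ssubset_iff_of_subset ?_ |>.2 ⟨i', ?_, ?_⟩
  · intro x hx
    simp at hx ⊢
    omega
  · simp [hl]
  · simp; omega

lemma pos_inj (B : SkewShape) {c d : ℕ × ℕ} (hc : c ∈ B.cells) (hd : d ∈ B.cells)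
    (hT : B.rowFill c = B.rowFill d) (hp : B.pos c = B.pos d) : c = d := by
  have h1 := B.pos_le hc
  have h2 := B.pos_le hd
  unfold rowFill at hT
  have h3 : c.1 = d.1 := by
    rcases lt_trichotomy c.1 d.1 with hl | hl | hl
    · exact absurd hT (B.rk_lt hl hp.ge h2.2).ne
    · exact hl
    · exact absurd hT (B.rk_lt hl hp.le h1.2).ne'
  obtain ⟨a, b⟩ := c
  obtain ⟨a', b'⟩ := d
  simp only at h3
  subst h3
  rw [mem_cells_row] at hc hd
  simp only [pos] at hp
  congr 1
  omega

lemma rowFill_isLR (B : SkewShape) : B.IsLR B.rowFill := by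
  refine ⟨⟨?_, ?_, ?_⟩, ?_⟩
  · intro c hc
    exact Finset.card_pos.2 ⟨c.1, Finset.mem_filter.2 ⟨Finset.mem_range.2 (Nat.lt_succ_self _), (B.pos_le hc).2⟩⟩
  · intro i j j' h h' hj
    unfold rowFill rk
    apply Finset.card_le_card
    intro x hx
    simp [pos] at hx ⊢
    omega
  · intro i i' j h h' hi
    have := B.outer.rowLen_anti i i' hi.le
    exact B.rk_lt hi (by simp only [pos]; omega) (B.pos_le h').2
  · intro d hd k
    rw [← Finset.card_image_of_injOn (f := B.pos)
      (s := B.cells.filter fun c => B.rowFill c = k + 2 ∧ ReadsBefore c d)]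
    · refine le_trans (Finset.card_le_card ?_) (Finset.card_image_le (f := B.pos))
      intro p hp
      simp only [Finset.mem_image, Finset.mem_filter] at hp ⊢
      obtain ⟨c, ⟨hc, hT, hr⟩, rfl⟩ := hp
      have hpl := B.pos_le hc
      set S := (Finset.range c.1).filter fun a => B.pos c ≤ B.rowLen a with hS
      have hcard : S.card = k + 1 := by
        unfold rowFill rk at hT
        rw [Finset.range_add_one, Finset.filter_insert, if_pos hpl.2,
          Finset.card_insert_of_notMem (by simp)] at hT
        change S.card + 1 = k + 2 at hT
        omega
      have hSne : S.Nonempty := Finset.card_pos.1 (by omega)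
      obtain ⟨a, ha, hmax⟩ := S.exists_max_image id hSne
      simp only [hS, Finset.mem_filter, Finset.mem_range, id] at ha hmax
      have hlen := B.rowLen_eq a
      have hle : B.inner.rowLen a ≤ B.outer.rowLen a := by
        by_contra hcon
        omega
      have hpos : B.pos (a, B.outer.rowLen a - B.pos c) = B.pos c := by
        have : ∀ p, p = B.pos c → B.outer.rowLen a - (B.outer.rowLen a - p) = p := by
          intro p hp
          omega
        exact this _ rfl
      refine ⟨(a, B.outer.rowLen a - B.pos c), ⟨?_, ?_, ?_⟩, hpos⟩
      · rw [mem_cells_row]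
        omega
      · rw [← hcard]
        unfold rowFill rk
        rw [hpos]
        congr 1
        ext x
        simp only [hS, Finset.mem_filter, Finset.mem_range]
        constructor
        · rintro ⟨h1, h2⟩
          exact ⟨by omega, h2⟩
        · rintro ⟨h1, h2⟩
          exact ⟨Nat.lt_succ_of_le (hmax x ⟨h1, h2⟩), h2⟩
      · unfold ReadsBefore at *
        simp only
        omega
    · intro c hc c' hc' e
      simp only [Finset.coe_filter, Set.mem_ofPred_eq] at hc hc'
      exact B.pos_inj hc.1 hc'.1 (hc.2.1.trans hc'.2.1.symm) e

lemma row_lower (B : SkewShape) (m : ℕ) : ∑ i ∈ B.rowSet, min m (B.rowLen i) ≤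
    ∑ r ∈ Finset.range (B.cells.sup B.rowFill), min m (B.content B.rowFill (r + 1)) := by
  have h1 : ∑ i ∈ B.rowSet, min m (B.rowLen i) ≤ (B.cells.filter fun c => B.pos c ≤ m).card := by
    rw [Finset.card_eq_sum_card_fiberwise (f := Prod.fst) (t := B.rowSet)]
    · refine Finset.sum_le_sum fun i _ => ?_
      have hlen := B.rowLen_eq i
      rw [← card_Icc_one (min m (B.rowLen i))]
      refine Finset.card_le_card_of_injOn (fun x => (i, B.outer.rowLen i - x)) ?_ ?_
      · intro x hx
        simp [mem_cells_row, pos] at hx ⊢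
        omega
      · intro x hx y hy e
        simp at hx hy e
        omega
    · intro c hc
      simp only [Finset.coe_filter, Set.mem_ofPred_eq] at hc
      exact Finset.mem_image_of_mem _ hc.1
  refine h1.trans ?_
  rw [Finset.card_eq_sum_card_fiberwise (f := fun c => B.rowFill c - 1)
    (t := Finset.range (B.cells.sup B.rowFill))]
  · refine Finset.sum_le_sum fun r _ => le_min ?_ ?_
    · refine le_of_le_of_eq ?_ (card_Icc_one m)
      refine Finset.card_le_card_of_injOn B.pos ?_ ?_
      · intro c hc
        simp only [Finset.coe_filter, Finset.mem_filter, Set.mem_ofPred_eq] at hc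
        simp only [Finset.coe_Icc, Set.mem_Icc]
        exact ⟨(B.pos_le hc.1.1).1, hc.1.2⟩
      · intro c hc d hd e
        simp only [Finset.coe_filter, Finset.mem_filter, Set.mem_ofPred_eq] at hc hd
        have h1 := B.rowFill_isLR.1.1 c hc.1.1
        have h2 := B.rowFill_isLR.1.1 d hd.1.1
        exact B.pos_inj hc.1.1 hd.1.1 (by omega) e
    · apply Finset.card_le_card
      intro c hc
      simp only [Finset.mem_filter] at hc ⊢
      have h1 := B.rowFill_isLR.1.1 c hc.1.1
      exact ⟨hc.1.1, by omega⟩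
  · intro c hc
    simp only [Finset.coe_filter, Set.mem_ofPred_eq] at hc
    have h1 := B.rowFill_isLR.1.1 c hc.1
    have h2 := Finset.le_sup (f := B.rowFill) hc.1
    simp only [Finset.coe_range, Set.mem_Iio]
    omega

end SkewShape

/-- If `A` and `B` are skew shapes of the same size with
`supp B ⊆ supp A`, then `rows A ⊴ rows B` and `cols A ⊴ cols B` in dominance
order. -/
theorem supp_subset_dominance (A B : SkewShape) (hsize : A.size = B.size)
    (h : B.supp ⊆ A.supp) :
    DomLe A.rows B.rows ∧ DomLe A.cols B.cols := by
  constructor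
  · obtain ⟨T, hT, hc⟩ := SkewShape.transfer h B.rowFill_isLR
    refine domLe_of_min _ _ _ _ (by rw [A.sum_rowLen, B.sum_rowLen, hsize]) fun m => ?_
    refine (B.row_lower m).trans ?_
    simp only [← hc]
    exact SkewShape.row_upper hT m _
  · obtain ⟨T, hT, hc⟩ := SkewShape.transfer h B.colFill_isLR
    refine domLe_of_min _ _ _ _ (by rw [A.sum_colLen, B.sum_colLen, hsize]) fun m => ?_
    refine (B.col_lower m).trans ?_
    simp only [← hc]
    exact SkewShape.col_upper hT.1 m
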